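/- arXiv:1708.00351 — 2 statements merged into one kernel-verified Lean document; each statement's English description precedes it below -/
import Mathlib

section
/- Let φ : X → [-∞, 0] be a measurable function with φ > -∞ μ-almost everywhere. Then the function c ↦ ∫_X F(φ(x) + c, x) dμ(x) is nondecreasing and continuous on ℝ, and satisfies ∫_X F(φ(x) + c, x) dμ(x) ≤ ∫_X F(c, x) dμ(x) < +∞ for every c ∈ ℝ. -/
/-!
The integrand is nondecreasing and continuous in `c`, and it is squeezed between `0` and `F c x`
because `φ ≤ 0`. It is therefore integrable for every `c`, and a family of integrable functions that
is monotone in its parameter is locally dominated by its own members, so dominated convergence makes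
its integral continuous.
-/

open MeasureTheory Filter Topology

section MonotoneFamily

variable {X ι : Type*} [MeasurableSpace X] {μ : Measure X} [Preorder ι]

theorem monotone_integral_of_ae_monotone {E : Type*} [NormedAddCommGroup E] [NormedSpace ℝ E]
    [PartialOrder E] [IsOrderedAddMonoid E] [IsOrderedModule ℝ E] [ClosedIciTopology E]
    {G : ι → X → E} (hG_int : ∀ c, Integrable (G c) μ)
    (hG_mono : ∀ᵐ x ∂μ, Monotone fun c => G c x) :
    Monotone fun c => ∫ x, G c x ∂μ := fun a b hab =>
  integral_mono_ae (hG_int a) (hG_int b) (hG_mono.mono fun _ hx => hx hab)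

theorem continuous_integral_of_ae_monotone [TopologicalSpace ι] [FirstCountableTopology ι]
    [BoundedLENhdsClass ι] [BoundedGENhdsClass ι] {G : ι → X → ℝ}
    (hG_int : ∀ c, Integrable (G c) μ) (hG_mono : ∀ᵐ x ∂μ, Monotone fun c => G c x)
    (hG_cont : ∀ᵐ x ∂μ, Continuous fun c => G c x) :
    Continuous fun c => ∫ x, G c x ∂μ := by
  refine continuous_iff_continuousAt.2 fun c₀ => ?_
  obtain ⟨b, hb⟩ : ∃ b, ∀ᶠ c in 𝓝 c₀, c ≤ b := isBounded_le_nhds c₀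
  obtain ⟨a, ha⟩ : ∃ a, ∀ᶠ c in 𝓝 c₀, a ≤ c := isBounded_ge_nhds c₀
  have h_dom : ∀ᶠ c in 𝓝 c₀, ∀ᵐ x ∂μ, ‖G c x‖ ≤ max |G a x| |G b x| := by
    filter_upwards [ha, hb] with c hac hcb
    filter_upwards [hG_mono] with x hx
    exact abs_le_max_abs_abs (hx hac) (hx hcb)
  exact continuousAt_of_dominated (.of_forall fun c => (hG_int c).aestronglyMeasurable) h_dom
    ((hG_int a).abs.sup (hG_int b).abs) (hG_cont.mono fun _ hx => hx.continuousAt)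

end MonotoneFamily

/-- The translate `c ↦ f (a + c)` of `f : ℝ → β` by an extended real `a`, with the convention
`f (-∞) = 0`. Only `a < ∞` is meaningful: since `EReal.toReal ⊤ = 0`, translation by `⊤` returns
`f`. -/
noncomputable def shiftByEReal {β : Type*} [Zero β] (f : ℝ → β) (a : EReal) (c : ℝ) : β :=
  if a = ⊥ then 0 else f (a.toReal + c)

namespace shiftByEReal

section Pointwise

variable {β : Type*} [Zero β] {f : ℝ → β} {a : EReal}

theorem nonneg [Preorder β] (hf : ∀ t, 0 ≤ f t) (c : ℝ) : 0 ≤ shiftByEReal f a c := by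
  unfold shiftByEReal
  split_ifs
  exacts [le_rfl, hf _]

theorem monotone [Preorder β] (hf : Monotone f) : Monotone (shiftByEReal f a) := by
  intro c d hcd
  unfold shiftByEReal
  split_ifs
  exacts [le_rfl, hf (add_le_add_right hcd _)]

theorem continuous [TopologicalSpace β] (hf : Continuous f) : Continuous (shiftByEReal f a) := by
  unfold shiftByEReal
  split_ifs
  exacts [continuous_const, hf.comp (continuous_const_add _)]

theorem le_self [Preorder β] (hf_nonneg : ∀ t, 0 ≤ f t) (hf_mono : Monotone f) (ha : a ≤ 0)
    (c : ℝ) : shiftByEReal f a c ≤ f c := by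
  unfold shiftByEReal
  split_ifs
  exacts [hf_nonneg c, hf_mono (add_le_of_nonpos_left (EReal.toReal_nonpos ha))]

end Pointwise

variable {X : Type*} [MeasurableSpace X]

theorem measurable {β : Type*} [Zero β] [MeasurableSpace β] {F : ℝ → X → β}
    (hF : Measurable (Function.uncurry F)) (c : ℝ) :
    Measurable fun p : EReal × X => shiftByEReal (F · p.2) p.1 c :=
  Measurable.ite (measurable_fst (measurableSet_singleton ⊥)) measurable_const
    (hF.comp ((measurable_fst.ereal_toReal.add_const c).prodMk measurable_snd))

theorem integrable {μ : Measure X} {F : ℝ → X → ℝ} {φ : X → EReal} {c : ℝ}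
    (hF_meas : Measurable (Function.uncurry F))
    (hF_nonneg : ∀ᵐ x ∂μ, ∀ t, 0 ≤ F t x)
    (hF_mono : ∀ᵐ x ∂μ, Monotone fun t => F t x)
    (hF_int : Integrable (F c) μ)
    (hφ_meas : AEMeasurable φ μ) (hφ_le : ∀ᵐ x ∂μ, φ x ≤ 0) :
    Integrable (fun x => shiftByEReal (F · x) (φ x) c) μ := by
  have h_meas : AEMeasurable (fun x => shiftByEReal (F · x) (φ x) c) μ :=
    (measurable hF_meas c).comp_aemeasurable (hφ_meas.prodMk aemeasurable_id)
  refine hF_int.mono' h_meas.aestronglyMeasurable ?_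
  filter_upwards [hF_nonneg, hF_mono, hφ_le] with x hx_nonneg hx_mono hx_le
  rw [Real.norm_of_nonneg (nonneg hx_nonneg c)]
  exact le_self hx_nonneg hx_mono hx_le c

end shiftByEReal

theorem shifted_integral_monotone_continuous_le_general
    {X : Type*} [MeasurableSpace X] {μ : Measure X} {F : ℝ → X → ℝ} {φ : X → EReal}
    (hF_meas : Measurable (Function.uncurry F))
    (hF_nonneg : ∀ᵐ x ∂μ, ∀ t, 0 ≤ F t x)
    (hF_cont : ∀ᵐ x ∂μ, Continuous fun t => F t x)
    (hF_mono : ∀ᵐ x ∂μ, Monotone fun t => F t x)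
    (hF_int : ∀ t : ℝ, Integrable (F t) μ)
    (hφ_meas : AEMeasurable φ μ)
    (hφ_le : ∀ᵐ x ∂μ, φ x ≤ 0) :
    Monotone (fun c : ℝ => ∫ x, shiftByEReal (F · x) (φ x) c ∂μ) ∧
    Continuous (fun c : ℝ => ∫ x, shiftByEReal (F · x) (φ x) c ∂μ) ∧
    ∀ c : ℝ,
      Integrable (fun x => shiftByEReal (F · x) (φ x) c) μ ∧
      ∫ x, shiftByEReal (F · x) (φ x) c ∂μ ≤ ∫ x, F c x ∂μ := by
  have h_int (c : ℝ) : Integrable (fun x => shiftByEReal (F · x) (φ x) c) μ :=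
    shiftByEReal.integrable hF_meas hF_nonneg hF_mono (hF_int c) hφ_meas hφ_le
  have h_mono : ∀ᵐ x ∂μ, Monotone fun c => shiftByEReal (F · x) (φ x) c :=
    hF_mono.mono fun _ => shiftByEReal.monotone
  have h_cont : ∀ᵐ x ∂μ, Continuous fun c => shiftByEReal (F · x) (φ x) c :=
    hF_cont.mono fun _ => shiftByEReal.continuous
  refine ⟨monotone_integral_of_ae_monotone h_int h_mono,
    continuous_integral_of_ae_monotone h_int h_mono h_cont, fun c => ⟨h_int c, ?_⟩⟩
  refine integral_mono_ae (h_int c) (hF_int c) ?_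
  filter_upwards [hF_nonneg, hF_mono, hφ_le] with x hx_nonneg hx_mono hx_le
  exact shiftByEReal.le_self hx_nonneg hx_mono hx_le c

/-- for a measurable `φ : X → [-∞, 0]` (an `EReal`-valued function) with
`φ > -∞` μ-a.e., the function `c ↦ ∫_X F(φ(x) + c, x) dμ(x)` — where `F(φ(x)+c, x)` is
interpreted as `0` on the null set `{φ = -∞}` — is nondecreasing and continuous on `ℝ`,
and for every `c` the integrand is integrable with
`∫_X F(φ(x)+c, x) dμ ≤ ∫_X F(c, x) dμ < +∞`. -/
theorem shifted_integral_monotone_continuous_le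
    {X : Type*} [MeasurableSpace X] (μ : Measure X) [IsFiniteMeasure μ]
    (F : ℝ → X → ℝ)
    (hF_meas : Measurable (Function.uncurry F))
    (hF_nonneg : ∀ t x, 0 ≤ F t x)
    (hF_cont : ∀ x, Continuous fun t => F t x)
    (hF_mono : ∀ x, Monotone fun t => F t x)
    (hF_int : ∀ t : ℝ, Integrable (F t) μ)
    (φ : X → EReal) (hφ_meas : Measurable φ)
    (hφ_le : ∀ x, φ x ≤ 0)
    (hφ_fin : ∀ᵐ x ∂μ, φ x ≠ ⊥) :
    Monotone (fun c : ℝ =>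
        ∫ x, (if φ x = ⊥ then 0 else F ((φ x).toReal + c) x) ∂μ) ∧
    Continuous (fun c : ℝ =>
        ∫ x, (if φ x = ⊥ then 0 else F ((φ x).toReal + c) x) ∂μ) ∧
    ∀ c : ℝ,
      Integrable (fun x => if φ x = ⊥ then 0 else F ((φ x).toReal + c) x) μ ∧
      (∫ x, (if φ x = ⊥ then 0 else F ((φ x).toReal + c) x) ∂μ) ≤ ∫ x, F c x ∂μ :=
  shifted_integral_monotone_continuous_le_general hF_meas (.of_forall fun x t => hF_nonneg t x)
    (.of_forall hF_cont) (.of_forall hF_mono) hF_int hφ_meas.aemeasurable (.of_forall hφ_le)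
end

section
/- Let A ∈ [0, +∞) and c₀ ∈ ℝ satisfy ∫_X F(c₀, x) dμ(x) = A, and assume lim_{t→+∞} ∫_X F(t, x) dμ(x) > A. Then for every measurable function φ : X → [-∞, 0] with φ > -∞ μ-almost everywhere, there exists a real number c_φ ≥ c₀ such that ∫_X F(φ(x) + c_φ, x) dμ(x) = A. -/
/-!
Let `G c` be the integral of `F (φ x + c) x`. Since `0 ≤ F (φ x + c) x ≤ F c x`, it is finite, and
`G c₀ ≤ A`. By monotonicity, domination near a point only needs integrability at two nearby
parameters, so `G` is continuous. As `φ` is finite almost everywhere, `F (φ x + c) x` eventually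
exceeds `F T x`, and truncating at `F T` shows that `G` eventually exceeds `A` once `∫ F T > A`.
The intermediate value theorem gives the constant.
-/

open MeasureTheory Filter Topology

section IntegralFamilies

variable {ι X : Type*} [MeasurableSpace X] {μ : Measure X} {f : ι → X → ℝ}

theorem continuous_integral_of_monotone [LinearOrder ι] [TopologicalSpace ι] [OrderTopology ι]
    [FirstCountableTopology ι] (hf_int : ∀ t, Integrable (f t) μ)
    (hf_mono : ∀ᵐ x ∂μ, Monotone fun t => f t x)
    (hf_cont : ∀ᵐ x ∂μ, Continuous fun t => f t x) :
    Continuous fun t => ∫ x, f t x ∂μ := by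
  refine continuous_iff_continuousAt.2 fun t => ?_
  obtain ⟨a, b, -, hab, -⟩ := exists_Icc_mem_subset_of_mem_nhds (univ_mem : Set.univ ∈ 𝓝 t)
  refine continuousAt_of_dominated (bound := fun x => max |f a x| |f b x|)
    (.of_forall fun s => (hf_int s).aestronglyMeasurable) ?_
    ((hf_int a).abs.sup (hf_int b).abs) (hf_cont.mono fun x hx => hx.continuousAt)
  filter_upwards [hab] with s hs
  filter_upwards [hf_mono] with x hx
  exact abs_le_max_abs_abs (hx hs.1) (hx hs.2)

theorem eventually_lt_integral_of_eventually_le {l : Filter ι} [l.IsCountablyGenerated]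
    {b h : X → ℝ} {A : ℝ} (hf_int : ∀ᶠ t in l, Integrable (f t) μ) (hb : Integrable b μ)
    (hbf : ∀ᶠ t in l, ∀ᵐ x ∂μ, b x ≤ f t x) (hh : Integrable h μ)
    (hhf : ∀ᵐ x ∂μ, ∀ᶠ t in l, h x ≤ f t x) (hA : A < ∫ x, h x ∂μ) :
    ∀ᶠ t in l, A < ∫ x, f t x ∂μ := by
  have truncation_tendsto :
      Tendsto (fun t => ∫ x, min (f t x) (h x) ∂μ) l (𝓝 (∫ x, h x ∂μ)) := by
    refine tendsto_integral_filter_of_dominated_convergence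
      (fun x => max |min (b x) (h x)| |h x|)
      (hf_int.mono fun t ht => (ht.inf hh).aestronglyMeasurable) ?_
      ((hb.inf hh).abs.sup hh.abs) ?_
    · filter_upwards [hbf] with t ht
      filter_upwards [ht] with x hx
      exact abs_le_max_abs_abs (min_le_min_right _ hx) (min_le_right _ _)
    · filter_upwards [hhf] with x hx
      exact tendsto_const_nhds.congr' (hx.mono fun t ht => (min_eq_right ht).symm)
  filter_upwards [truncation_tendsto.eventually_const_lt hA, hf_int] with t hAt ht
  exact hAt.trans_le (integral_mono (ht.inf hh) ht fun x => min_le_left _ _)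

end IntegralFamilies

section Shift

variable {X : Type*} [MeasurableSpace X] {μ : Measure X} {F : ℝ → X → ℝ} {ψ : X → ℝ}

theorem integrable_shift (hF_meas : Measurable (Function.uncurry F))
    (hF_nonneg : ∀ᵐ x ∂μ, ∀ t, 0 ≤ F t x) (hF_mono : ∀ᵐ x ∂μ, Monotone fun t => F t x)
    (hψ : AEMeasurable ψ μ) (hψ_nonpos : ∀ᵐ x ∂μ, ψ x ≤ 0) {c : ℝ} (hF_int : Integrable (F c) μ) :
    Integrable (fun x => F (ψ x + c) x) μ := by
  refine hF_int.mono'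
    (hF_meas.comp_aemeasurable ((hψ.add_const c).prodMk aemeasurable_id)).aestronglyMeasurable ?_
  filter_upwards [hF_nonneg, hF_mono, hψ_nonpos] with x h_nonneg h_mono hx
  rw [Real.norm_of_nonneg (h_nonneg _)]
  exact h_mono (add_le_of_nonpos_left hx)

theorem exists_integral_shift_eq (hF_meas : Measurable (Function.uncurry F))
    (hF_nonneg : ∀ᵐ x ∂μ, ∀ t, 0 ≤ F t x) (hF_cont : ∀ᵐ x ∂μ, Continuous fun t => F t x)
    (hF_mono : ∀ᵐ x ∂μ, Monotone fun t => F t x) (hF_int : ∀ t, Integrable (F t) μ)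
    {A c₀ T : ℝ} (hc₀ : ∫ x, F c₀ x ∂μ ≤ A) (hT : A < ∫ x, F T x ∂μ)
    (hψ : AEMeasurable ψ μ) (hψ_nonpos : ∀ᵐ x ∂μ, ψ x ≤ 0) :
    ∃ c, c₀ ≤ c ∧ ∫ x, F (ψ x + c) x ∂μ = A := by
  have shift_int (c : ℝ) : Integrable (fun x => F (ψ x + c) x) μ :=
    integrable_shift hF_meas hF_nonneg hF_mono hψ hψ_nonpos (hF_int c)
  have shift_continuous : Continuous fun c => ∫ x, F (ψ x + c) x ∂μ :=
    continuous_integral_of_monotone shift_int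
      (hF_mono.mono fun x hx => hx.comp (add_right_mono (a := ψ x)))
      (hF_cont.mono fun x hx => hx.comp (continuous_const_add (ψ x)))
  have shift_le : ∫ x, F (ψ x + c₀) x ∂μ ≤ A := by
    refine (integral_mono_ae (shift_int c₀) (hF_int c₀) ?_).trans hc₀
    filter_upwards [hF_mono, hψ_nonpos] with x h_mono hx
    exact h_mono (add_le_of_nonpos_left hx)
  have lt_shift : ∀ᶠ c in atTop, A < ∫ x, F (ψ x + c) x ∂μ := by
    refine eventually_lt_integral_of_eventually_le (.of_forall shift_int) (integrable_zero X ℝ μ)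
      (.of_forall fun c => hF_nonneg.mono fun x hx => hx _) (hF_int T) ?_ hT
    filter_upwards [hF_mono] with x hx
    filter_upwards [eventually_ge_atTop (T - ψ x)] with c hc
    exact hx (sub_le_iff_le_add'.1 hc)
  obtain ⟨c₁, hc₁, hAc₁⟩ := ((eventually_ge_atTop c₀).and lt_shift).exists
  obtain ⟨c, hc, hAc⟩ :=
    intermediate_value_Icc hc₁ shift_continuous.continuousOn ⟨shift_le, hAc₁.le⟩
  exact ⟨c, hc.1, hAc⟩

theorem exists_normalizing_constant_for_shift_general
    (hF_meas : Measurable (Function.uncurry F))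
    (hF_nonneg : ∀ᵐ x ∂μ, ∀ t, 0 ≤ F t x) (hF_cont : ∀ᵐ x ∂μ, Continuous fun t => F t x)
    (hF_mono : ∀ᵐ x ∂μ, Monotone fun t => F t x) (hF_int : ∀ t, Integrable (F t) μ)
    {A c₀ T : ℝ} (hc₀ : ∫ x, F c₀ x ∂μ ≤ A) (hT : A < ∫ x, F T x ∂μ) {φ : X → EReal}
    (hφ : AEMeasurable φ μ) (hφ_nonpos : ∀ᵐ x ∂μ, φ x ≤ 0) (hφ_ne_bot : ∀ᵐ x ∂μ, φ x ≠ ⊥) :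
    ∃ c : ℝ, c₀ ≤ c ∧ ∫ x, (if φ x = ⊥ then 0 else F ((φ x).toReal + c) x) ∂μ = A := by
  obtain ⟨c, hc, hAc⟩ := exists_integral_shift_eq hF_meas hF_nonneg hF_cont hF_mono hF_int hc₀ hT
    hφ.ereal_toReal (hφ_nonpos.mono fun x => EReal.toReal_nonpos)
  refine ⟨c, hc, Eq.trans (integral_congr_ae ?_) hAc⟩
  exact hφ_ne_bot.mono fun x hx => if_neg hx

end Shift

/-- if `A ∈ [0,∞)` and `c₀ ∈ ℝ` satisfy `∫ F(c₀,·) dμ = A`, and the limit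
`L ∈ [0,+∞]` of `t ↦ ∫ F(t,·) dμ` as `t → +∞` (which exists by monotonicity) satisfies
`L > A`, then for every measurable `φ : X → [-∞, 0]` with `φ > -∞` μ-a.e. there exists
`c_φ ≥ c₀` with `∫_X F(φ(x) + c_φ, x) dμ(x) = A`, where `F(φ(x)+c, x)` is interpreted as
`0` on the null set `{φ = -∞}`. -/
theorem exists_normalizing_constant_for_shift
    {X : Type*} [MeasurableSpace X] (μ : Measure X) [IsFiniteMeasure μ]
    (F : ℝ → X → ℝ)
    (hF_meas : Measurable (Function.uncurry F))
    (hF_nonneg : ∀ t x, 0 ≤ F t x)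
    (hF_cont : ∀ x, Continuous fun t => F t x)
    (hF_mono : ∀ x, Monotone fun t => F t x)
    (hF_int : ∀ t : ℝ, Integrable (F t) μ)
    (A : ℝ) (hA : 0 ≤ A)
    (c₀ : ℝ) (hc₀ : ∫ x, F c₀ x ∂μ = A)
    (hlim : ∃ L : EReal,
      Tendsto (fun t : ℝ => ((∫ x, F t x ∂μ : ℝ) : EReal)) atTop (nhds L) ∧ (A : EReal) < L) :
    ∀ φ : X → EReal, Measurable φ → (∀ x, φ x ≤ 0) → (∀ᵐ x ∂μ, φ x ≠ ⊥) →
      ∃ c : ℝ, c₀ ≤ c ∧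
        ∫ x, (if φ x = ⊥ then 0 else F ((φ x).toReal + c) x) ∂μ = A := by
  intro φ hφ hφ_nonpos hφ_ne_bot
  obtain ⟨L, hL, hAL⟩ := hlim
  obtain ⟨T, hT⟩ := (hL.eventually_const_lt hAL).exists
  exact exists_normalizing_constant_for_shift_general hF_meas (.of_forall fun x t => hF_nonneg t x)
    (.of_forall hF_cont) (.of_forall hF_mono) hF_int hc₀.le (EReal.coe_lt_coe_iff.1 hT)
    hφ.aemeasurable (.of_forall hφ_nonpos) hφ_ne_bot
end
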